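/- Let A be a unital associative algebra, a ∈ Z(A), σ ∈ Aut(A), and let S be the multiplicative submonoid of Z(A) generated by {σ^m(a) : m ∈ Z}. Then the localization of the generalized Weyl algebra W_{a,σ} at S is isomorphic to the skew Laurent ring A_S[x, x^{-1}; σ]; i.e., the embedding W_{a,σ} ⊆ A[x, x^{-1}; σ] becomes an isomorphism after localization at S. -/

import Mathlib

/-!
Write `W = W_{a,σ}` and let `T` be the image of `S` in `W`.

`T` is a left Ore set. The relations of `W` are homogeneous for `deg x = 1`, `deg y = -1`,
`deg A = 0`, so there is a coaction `W → W[z, z⁻¹]` (`coaction`), and every element of `W` is a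
finite sum of weight vectors `wᵢ`, which satisfy `wᵢ s = σ^i(s) wᵢ` for central `s ∈ A`
(`exists_weight_decomposition`). Given `w = ∑ wᵢ` and `s ∈ S`, let `t ∈ S` be a common multiple
`t = qᵢ σ^i(s)` of the finitely many `σ^i(s)` that occur; then `t w = (∑ qᵢ wᵢ) s`, which is the Ore
condition. If moreover `w s = 0`, the coaction gives `wᵢ s = 0` for every `i`
(`mul_incl_eq_zero`), whence `t w = 0`, which is the weak cancellation condition. No basis theorem
for `W` is needed, and `a` may be a zero divisor.

The isomorphism comes from universal properties (`nonempty_equiv`). In `A_S[x, x⁻¹; τ]` the elements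
`x` and `a x⁻¹` satisfy the relations of `W` and `S` becomes invertible, which gives a map out of
`T⁻¹W`. Conversely, in `T⁻¹W` the element `x` is a unit since `y x = a` and `x y = σ(a)` are, and
conjugation by `x` acts on the image of `A_S` through `τ`, since it does so on `A`. The two maps are
mutually inverse because they are so on generators.
-/

noncomputable section

open FreeAlgebra

/-- Generators for the skew Laurent polynomial ring `A[x,x⁻¹;σ]`. -/
inductive SLgen (A : Type) : Type
  | incl : A → SLgen A
  | x : SLgen A
  | xinv : SLgen A

variable (k : Type) [Field k] (A : Type) [Ring A] [Algebra k A]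

/-- Relations for the skew Laurent polynomial ring `A[x,x⁻¹;σ]`. -/
inductive SLrel (σ : A ≃ₐ[k] A) : FreeAlgebra k (SLgen A) → FreeAlgebra k (SLgen A) → Prop
  | add (a b : A) : SLrel σ (ι k (SLgen.incl (a + b))) (ι k (SLgen.incl a) + ι k (SLgen.incl b))
  | mul (a b : A) : SLrel σ (ι k (SLgen.incl (a * b))) (ι k (SLgen.incl a) * ι k (SLgen.incl b))
  | alg (c : k) : SLrel σ (ι k (SLgen.incl (algebraMap k A c))) (algebraMap k _ c)
  | xxinv : SLrel σ (ι k SLgen.x * ι k SLgen.xinv) 1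
  | xinvx : SLrel σ (ι k SLgen.xinv * ι k SLgen.x) 1
  | skew (a : A) : SLrel σ (ι k SLgen.x * ι k (SLgen.incl a)) (ι k (SLgen.incl (σ a)) * ι k SLgen.x)

/-- The skew Laurent polynomial ring `A[x,x⁻¹;σ]`. -/
abbrev SkewLaurent (σ : A ≃ₐ[k] A) : Type := RingQuot (SLrel k A σ)

variable (σ : A ≃ₐ[k] A)

/-- The canonical inclusion `A → A[x,x⁻¹;σ]`. -/
def SkewLaurent.incl (a : A) : SkewLaurent k A σ :=
  RingQuot.mkAlgHom k (SLrel k A σ) (ι k (SLgen.incl a))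

/-- The invertible generator `x` of `A[x,x⁻¹;σ]`. -/
def SkewLaurent.X : SkewLaurent k A σ :=
  RingQuot.mkAlgHom k (SLrel k A σ) (ι k SLgen.x)

/-- The inverse `x⁻¹` of the generator of `A[x,x⁻¹;σ]`. -/
def SkewLaurent.Xinv : SkewLaurent k A σ :=
  RingQuot.mkAlgHom k (SLrel k A σ) (ι k SLgen.xinv)

/-- Generators for a generalized Weyl algebra. -/
inductive Wgen (A : Type) : Type
  | incl : A → Wgen A
  | x : Wgen A
  | y : Wgen A

/-- Relations for the generalized Weyl algebra `W_{a,σ}`. -/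
inductive Wrel (σ : A ≃ₐ[k] A) (a : A) :
    FreeAlgebra k (Wgen A) → FreeAlgebra k (Wgen A) → Prop
  | add (u v : A) : Wrel σ a (ι k (Wgen.incl (u + v))) (ι k (Wgen.incl u) + ι k (Wgen.incl v))
  | mul (u v : A) : Wrel σ a (ι k (Wgen.incl (u * v))) (ι k (Wgen.incl u) * ι k (Wgen.incl v))
  | alg (c : k) : Wrel σ a (ι k (Wgen.incl (algebraMap k A c))) (algebraMap k _ c)
  | yx : Wrel σ a (ι k Wgen.y * ι k Wgen.x) (ι k (Wgen.incl a))
  | xy : Wrel σ a (ι k Wgen.x * ι k Wgen.y) (ι k (Wgen.incl (σ a)))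
  | xu (u : A) : Wrel σ a (ι k Wgen.x * ι k (Wgen.incl u)) (ι k (Wgen.incl (σ u)) * ι k Wgen.x)
  | yu (u : A) : Wrel σ a (ι k Wgen.y * ι k (Wgen.incl (σ u))) (ι k (Wgen.incl u) * ι k Wgen.y)

/-- The generalized Weyl algebra `W_{a,σ}`. -/
abbrev GWA (a : A) : Type := RingQuot (Wrel k A σ a)

/-- The canonical inclusion `A → W_{a,σ}`. -/
def GWA.incl (a : A) (u : A) : GWA k A σ a :=
  RingQuot.mkAlgHom k (Wrel k A σ a) (ι k (Wgen.incl u))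

/-- The generator `x` of `W_{a,σ}`. -/
def GWA.X (a : A) : GWA k A σ a :=
  RingQuot.mkAlgHom k (Wrel k A σ a) (ι k Wgen.x)

/-- The generator `y` of `W_{a,σ}`. -/
def GWA.Y (a : A) : GWA k A σ a :=
  RingQuot.mkAlgHom k (Wrel k A σ a) (ι k Wgen.y)



namespace GWALocalization

/-! ### Universal property of the Ore localization -/

section Ore

variable {R : Type} [Ring R] [Algebra k R] (M : Submonoid R) [OreLocalization.OreSet M]
  {B : Type} [Ring B] [Algebra k B]

theorem isUnit_numerator (s : R) (hs : s ∈ M) :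
    IsUnit (OreLocalization.numeratorRingHom (S := M) s) :=
  OreLocalization.numerator_isUnit (⟨s, hs⟩ : M)

/-- The universal property of the Ore localization, in terms of `k`-algebra homomorphisms. -/
theorem exists_ore_lift (f : R →ₐ[k] B) (hf : ∀ s ∈ M, IsUnit (f s)) :
    ∃ g : OreLocalization M R →ₐ[k] B,
      ∀ r, g (OreLocalization.numeratorRingHom r) = f r := by
  -- the units `f s` assemble into a monoid homomorphism `M →* Bˣ`
  let fS : M →* Bˣ := IsUnit.liftRight ((f : R →* B).comp M.subtype) fun s => hf s s.2
  have hfS : ∀ s : M, (f : R →+* B) s = fS s := fun s => rfl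
  have key : ∀ r, OreLocalization.universalHom (f : R →+* B) fS hfS
      (OreLocalization.numeratorRingHom r) = f r := fun r =>
    OreLocalization.universalHom_commutes (f : R →+* B) fS hfS
  exact ⟨{ OreLocalization.universalHom (f : R →+* B) fS hfS with
    commutes' := fun c => (key (algebraMap k R c)).trans (f.commutes c) }, key⟩

variable {k M} in
theorem ore_hom_ext {f g : OreLocalization M R →ₐ[k] B}
    (h : ∀ r, f (OreLocalization.numeratorRingHom r) = g (OreLocalization.numeratorRingHom r)) :
    f = g := by
  ext x
  induction x using OreLocalization.ind with | _ r s
  have hs : OreLocalization.numeratorRingHom (S := M) (s : R) * (r /ₒ s)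
      = OreLocalization.numeratorRingHom r :=
    OreLocalization.mul_cancel
  have hu : IsUnit (f (OreLocalization.numeratorRingHom (S := M) (s : R))) :=
    (isUnit_numerator M _ s.2).map f
  apply hu.mul_left_cancel
  rw [← map_mul, hs, h r, h (s : R), ← map_mul, hs]

end Ore

/-! ### Universal property of the skew Laurent ring -/

section SkewLaurent

/-- The inclusion `A → A[x,x⁻¹;σ]` as an algebra homomorphism. -/
def slIncl : A →ₐ[k] SkewLaurent k A σ :=
  AlgHom.ofLinearMap
    { toFun := SkewLaurent.incl k A σ
      map_add' := fun u v => by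
        simpa [SkewLaurent.incl] using RingQuot.mkAlgHom_rel k (SLrel.add (σ := σ) u v)
      map_smul' := fun c u => by
        have h1 := RingQuot.mkAlgHom_rel k (SLrel.mul (σ := σ) (algebraMap k A c) u)
        have h2 := RingQuot.mkAlgHom_rel k (SLrel.alg (k := k) (A := A) (σ := σ) c)
        simp only [map_mul, h2] at h1
        simpa [SkewLaurent.incl, Algebra.smul_def] using h1 }
    (by simpa [SkewLaurent.incl] using RingQuot.mkAlgHom_rel k (SLrel.alg (k := k) (A := A) (σ := σ) 1))
    (fun u v => by
      simpa [SkewLaurent.incl] using RingQuot.mkAlgHom_rel k (SLrel.mul (σ := σ) u v))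

theorem slX_mul_Xinv : SkewLaurent.X k A σ * SkewLaurent.Xinv k A σ = 1 := by
  simpa [SkewLaurent.X, SkewLaurent.Xinv] using
    RingQuot.mkAlgHom_rel k (SLrel.xxinv (k := k) (A := A) (σ := σ))

theorem slXinv_mul_X : SkewLaurent.Xinv k A σ * SkewLaurent.X k A σ = 1 := by
  simpa [SkewLaurent.X, SkewLaurent.Xinv] using
    RingQuot.mkAlgHom_rel k (SLrel.xinvx (k := k) (A := A) (σ := σ))

theorem slX_mul_incl (u : A) :
    SkewLaurent.X k A σ * slIncl k A σ u = slIncl k A σ (σ u) * SkewLaurent.X k A σ := by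
  simpa [SkewLaurent.X, SkewLaurent.incl, slIncl] using
    RingQuot.mkAlgHom_rel k (SLrel.skew (k := k) (A := A) (σ := σ) u)

theorem slXinv_mul_incl (u : A) :
    SkewLaurent.Xinv k A σ * slIncl k A σ (σ u)
      = slIncl k A σ u * SkewLaurent.Xinv k A σ := by
  calc _ = SkewLaurent.Xinv k A σ * (slIncl k A σ (σ u) * SkewLaurent.X k A σ)
        * SkewLaurent.Xinv k A σ := by
          simp only [mul_assoc, slX_mul_Xinv, mul_one]
    _ = _ := by
      rw [← slX_mul_incl, ← mul_assoc, slXinv_mul_X, one_mul]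

variable {B : Type} [Ring B] [Algebra k B]

theorem exists_sl_lift (j : A →ₐ[k] B) (X Xi : B) (h1 : X * Xi = 1) (h2 : Xi * X = 1)
    (h3 : ∀ u, X * j u = j (σ u) * X) :
    ∃ F : SkewLaurent k A σ →ₐ[k] B,
      (∀ u, F (slIncl k A σ u) = j u) ∧ F (SkewLaurent.X k A σ) = X ∧
        F (SkewLaurent.Xinv k A σ) = Xi := by
  let f : FreeAlgebra k (SLgen A) →ₐ[k] B := FreeAlgebra.lift k fun g => match g with
    | SLgen.incl u => j u
    | SLgen.x => X
    | SLgen.xinv => Xi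
  have hf : ∀ ⦃p q⦄, SLrel k A σ p q → f p = f q := by
    intro p q h
    cases h <;> simp [f, h1, h2, h3]
  refine ⟨RingQuot.liftAlgHom k ⟨f, hf⟩, fun u => ?_, ?_, ?_⟩
  · exact (RingQuot.liftAlgHom_mkAlgHom_apply k f hf _).trans (by simp [f])
  · exact (RingQuot.liftAlgHom_mkAlgHom_apply k f hf _).trans (by simp [f])
  · exact (RingQuot.liftAlgHom_mkAlgHom_apply k f hf _).trans (by simp [f])

variable {k A σ} in
theorem sl_hom_ext {f g : SkewLaurent k A σ →ₐ[k] B}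
    (h : ∀ u, f (slIncl k A σ u) = g (slIncl k A σ u))
    (hX : f (SkewLaurent.X k A σ) = g (SkewLaurent.X k A σ)) : f = g := by
  -- two-sided inverses are unique, so agreement at `x` forces agreement at `x⁻¹`
  have hXi : f (SkewLaurent.Xinv k A σ) = g (SkewLaurent.Xinv k A σ) := by
    refine left_inv_eq_right_inv (a := f (SkewLaurent.X k A σ)) ?_ ?_
    · rw [← map_mul, slXinv_mul_X, map_one]
    · rw [hX, ← map_mul, slX_mul_Xinv, map_one]
  apply RingQuot.ringQuot_ext'
  apply FreeAlgebra.hom_ext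
  funext p
  cases p with
  | incl u => exact h u
  | x => exact hX
  | xinv => exact hXi

end SkewLaurent

/-! ### Universal property of the generalized Weyl algebra -/

section GWA

variable (a : A)

/-- The canonical map `A → W_{a,σ}` as an algebra homomorphism. -/
def wIncl : A →ₐ[k] GWA k A σ a :=
  AlgHom.ofLinearMap
    { toFun := GWA.incl k A σ a
      map_add' := fun u v => by
        simpa [GWA.incl] using RingQuot.mkAlgHom_rel k (Wrel.add (σ := σ) (a := a) u v)
      map_smul' := fun c u => by
        have h1 := RingQuot.mkAlgHom_rel k (Wrel.mul (σ := σ) (a := a) (algebraMap k A c) u)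
        have h2 := RingQuot.mkAlgHom_rel k (Wrel.alg (k := k) (A := A) (σ := σ) (a := a) c)
        simp only [map_mul, h2] at h1
        simpa [GWA.incl, Algebra.smul_def] using h1 }
    (by simpa [GWA.incl] using RingQuot.mkAlgHom_rel k (Wrel.alg (k := k) (A := A) (σ := σ) (a := a) 1))
    (fun u v => by
      simpa [GWA.incl] using RingQuot.mkAlgHom_rel k (Wrel.mul (σ := σ) (a := a) u v))

theorem wY_mul_X : GWA.Y k A σ a * GWA.X k A σ a = wIncl k A σ a a := by
  simpa [GWA.X, GWA.Y, wIncl, GWA.incl] using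
    RingQuot.mkAlgHom_rel k (Wrel.yx (k := k) (A := A) (σ := σ) (a := a))

theorem wX_mul_Y : GWA.X k A σ a * GWA.Y k A σ a = wIncl k A σ a (σ a) := by
  simpa [GWA.X, GWA.Y, wIncl, GWA.incl] using
    RingQuot.mkAlgHom_rel k (Wrel.xy (k := k) (A := A) (σ := σ) (a := a))

theorem wX_mul_incl (u : A) :
    GWA.X k A σ a * wIncl k A σ a u = wIncl k A σ a (σ u) * GWA.X k A σ a := by
  simpa [GWA.X, wIncl, GWA.incl] using
    RingQuot.mkAlgHom_rel k (Wrel.xu (k := k) (A := A) (σ := σ) (a := a) u)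

theorem wY_mul_incl (u : A) :
    GWA.Y k A σ a * wIncl k A σ a (σ u) = wIncl k A σ a u * GWA.Y k A σ a := by
  simpa [GWA.Y, wIncl, GWA.incl] using
    RingQuot.mkAlgHom_rel k (Wrel.yu (k := k) (A := A) (σ := σ) (a := a) u)

variable {B : Type} [Ring B] [Algebra k B]

theorem exists_w_lift (j : A →ₐ[k] B) (X Y : B) (h1 : Y * X = j a) (h2 : X * Y = j (σ a))
    (h3 : ∀ u, X * j u = j (σ u) * X) (h4 : ∀ u, Y * j (σ u) = j u * Y) :
    ∃ F : GWA k A σ a →ₐ[k] B,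
      (∀ u, F (wIncl k A σ a u) = j u) ∧ F (GWA.X k A σ a) = X ∧ F (GWA.Y k A σ a) = Y := by
  let f : FreeAlgebra k (Wgen A) →ₐ[k] B := FreeAlgebra.lift k fun g => match g with
    | Wgen.incl u => j u
    | Wgen.x => X
    | Wgen.y => Y
  have hf : ∀ ⦃p q⦄, Wrel k A σ a p q → f p = f q := by
    intro p q h
    cases h <;> simp [f, h1, h2, h3, h4]
  refine ⟨RingQuot.liftAlgHom k ⟨f, hf⟩, fun u => ?_, ?_, ?_⟩
  · exact (RingQuot.liftAlgHom_mkAlgHom_apply k f hf _).trans (by simp [f])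
  · exact (RingQuot.liftAlgHom_mkAlgHom_apply k f hf _).trans (by simp [f])
  · exact (RingQuot.liftAlgHom_mkAlgHom_apply k f hf _).trans (by simp [f])

variable {k A σ a} in
theorem w_hom_ext {f g : GWA k A σ a →ₐ[k] B}
    (h : ∀ u, f (wIncl k A σ a u) = g (wIncl k A σ a u))
    (hX : f (GWA.X k A σ a) = g (GWA.X k A σ a)) (hY : f (GWA.Y k A σ a) = g (GWA.Y k A σ a)) :
    f = g := by
  apply RingQuot.ringQuot_ext'
  apply FreeAlgebra.hom_ext
  funext p
  cases p with
  | incl u => exact h u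
  | x => exact hX
  | y => exact hY

theorem w_adjoin_eq_top (P : Subalgebra k (GWA k A σ a)) (h : ∀ u, wIncl k A σ a u ∈ P)
    (hX : GWA.X k A σ a ∈ P) (hY : GWA.Y k A σ a ∈ P) : P = ⊤ := by
  refine Algebra.eq_top_iff.2 fun w => ?_
  obtain ⟨p, rfl⟩ := RingQuot.mkAlgHom_surjective k (Wrel k A σ a) w
  induction p using FreeAlgebra.induction with
  | grade0 c => rw [AlgHom.commutes]; exact P.algebraMap_mem c
  | grade1 g =>
    cases g with
    | incl u => exact h u
    | x => exact hX
    | y => exact hY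
  | mul p q hp hq => rw [map_mul]; exact P.mul_mem hp hq
  | add p q hp hq => rw [map_add]; exact P.add_mem hp hq

/-! ### The weight grading -/

/-- The defining relations of `W_{a,σ}` are homogeneous for `deg A = 0`, `deg x = 1`,
`deg y = -1`. -/
theorem exists_coaction : ∃ δ : GWA k A σ a →ₐ[k] AddMonoidAlgebra (GWA k A σ a) ℤ,
    (∀ u, δ (wIncl k A σ a u) = AddMonoidAlgebra.single 0 (wIncl k A σ a u)) ∧
    δ (GWA.X k A σ a) = AddMonoidAlgebra.single 1 (GWA.X k A σ a) ∧
    δ (GWA.Y k A σ a) = AddMonoidAlgebra.single (-1) (GWA.Y k A σ a) := by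
  let j : A →ₐ[k] AddMonoidAlgebra (GWA k A σ a) ℤ :=
    AddMonoidAlgebra.singleZeroAlgHom.comp (wIncl k A σ a)
  have hj : ∀ u, j u = AddMonoidAlgebra.single 0 (wIncl k A σ a u) := fun u => rfl
  obtain ⟨δ, h1, h2, h3⟩ := exists_w_lift k A σ a j
    (AddMonoidAlgebra.single 1 (GWA.X k A σ a)) (AddMonoidAlgebra.single (-1) (GWA.Y k A σ a))
    (by rw [hj, AddMonoidAlgebra.single_mul_single, wY_mul_X, neg_add_cancel])
    (by rw [hj, AddMonoidAlgebra.single_mul_single, wX_mul_Y, add_neg_cancel])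
    (fun u => by simp only [hj, AddMonoidAlgebra.single_mul_single, wX_mul_incl, add_zero, zero_add])
    (fun u => by simp only [hj, AddMonoidAlgebra.single_mul_single, wY_mul_incl, add_zero, zero_add])
  exact ⟨δ, h1, h2, h3⟩

/-- The coaction `W → W[z, z⁻¹]` of the `ℤ`-grading of `W = W_{a,σ}` in which `A` has degree `0`,
`x` has degree `1` and `y` has degree `-1`. -/
def coaction : GWA k A σ a →ₐ[k] AddMonoidAlgebra (GWA k A σ a) ℤ :=
  (exists_coaction k A σ a).choose

theorem coaction_incl (u : A) :
    coaction k A σ a (wIncl k A σ a u) = AddMonoidAlgebra.single 0 (wIncl k A σ a u) :=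
  (exists_coaction k A σ a).choose_spec.1 u

theorem center_map (e : A ≃ₐ[k] A) {s : A} (hs : s ∈ Set.center A) : e s ∈ Set.center A := by
  rw [Semigroup.mem_center_iff] at hs ⊢
  intro g
  have := congrArg e (hs (e.symm g))
  simpa using this

/-- The elements `w` of degree `i` for `coaction` that moreover satisfy `w s = σ^i(s) w` for all
central `s ∈ A`. -/
def weightSpace (i : ℤ) : Submodule k (GWA k A σ a) where
  carrier := {w | coaction k A σ a w = AddMonoidAlgebra.single i w ∧
    ∀ s ∈ Set.center A, w * wIncl k A σ a s = wIncl k A σ a ((σ ^ i) s) * w}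
  add_mem' := fun {v w} hv hw =>
    ⟨by rw [map_add, hv.1, hw.1, AddMonoidAlgebra.single_add],
      fun s hs => by rw [add_mul, mul_add, hv.2 s hs, hw.2 s hs]⟩
  zero_mem' := ⟨by simp, fun s _ => by simp⟩
  smul_mem' := fun c w hw =>
    ⟨by rw [map_smul, hw.1, AddMonoidAlgebra.smul_single],
      fun s hs => by rw [smul_mul_assoc, mul_smul_comm, hw.2 s hs]⟩

theorem weightSpace_mul_mem {i j : ℤ} {v w : GWA k A σ a} (hv : v ∈ weightSpace k A σ a i)
    (hw : w ∈ weightSpace k A σ a j) : v * w ∈ weightSpace k A σ a (i + j) := by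
  refine ⟨by rw [map_mul, hv.1, hw.1, AddMonoidAlgebra.single_mul_single], fun s hs => ?_⟩
  rw [mul_assoc, hw.2 s hs, ← mul_assoc, hv.2 _ (center_map k A _ hs), mul_assoc, zpow_add]
  rfl

theorem incl_mem_weightSpace (u : A) : wIncl k A σ a u ∈ weightSpace k A σ a 0 := by
  refine ⟨coaction_incl k A σ a u, fun s hs => ?_⟩
  rw [← map_mul, zpow_zero, AlgEquiv.one_apply, ← map_mul, Semigroup.mem_center_iff.1 hs u]

theorem X_mem_weightSpace : GWA.X k A σ a ∈ weightSpace k A σ a 1 :=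
  ⟨(exists_coaction k A σ a).choose_spec.2.1, fun s _ => by rw [wX_mul_incl, zpow_one]⟩

theorem Y_mem_weightSpace : GWA.Y k A σ a ∈ weightSpace k A σ a (-1) := by
  refine ⟨(exists_coaction k A σ a).choose_spec.2.2, fun s _ => ?_⟩
  have h : σ ((σ ^ (-1 : ℤ)) s) = s := by
    rw [← AlgEquiv.mul_apply, ← zpow_one_add]; simp
  rw [← wY_mul_incl, h]

theorem iSup_weightSpace : ⨆ i, weightSpace k A σ a i = ⊤ := by
  have hle := le_iSup (weightSpace k A σ a)
  have hmul : (⨆ i, weightSpace k A σ a i) * (⨆ i, weightSpace k A σ a i)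
      ≤ ⨆ i, weightSpace k A σ a i := by
    rw [Submodule.iSup_mul]
    refine iSup_le fun i => ?_
    rw [Submodule.mul_iSup]
    refine iSup_le fun j => ?_
    rw [Submodule.mul_le]
    exact fun v hv w hw => hle (i + j) (weightSpace_mul_mem k A σ a hv hw)
  let P : Subalgebra k (GWA k A σ a) := (⨆ i, weightSpace k A σ a i).toSubalgebra
    (hle 0 (by simpa using incl_mem_weightSpace k A σ a 1))
    (fun v w hv hw => hmul (Submodule.mul_mem_mul hv hw))
  have hP : P = ⊤ := w_adjoin_eq_top k A σ a P
    (fun u => hle 0 (incl_mem_weightSpace k A σ a u)) (hle 1 (X_mem_weightSpace k A σ a))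
    (hle (-1) (Y_mem_weightSpace k A σ a))
  refine eq_top_iff.2 fun w _ => ?_
  have hw : w ∈ P := hP ▸ Algebra.mem_top
  exact hw

theorem exists_weight_decomposition (w : GWA k A σ a) :
    ∃ c : ℤ →₀ GWA k A σ a, (∀ i, c i ∈ weightSpace k A σ a i) ∧ ∑ i ∈ c.support, c i = w := by
  have hw : w ∈ ⨆ i, weightSpace k A σ a i := by rw [iSup_weightSpace]; trivial
  obtain ⟨c, hc, h⟩ := (Submodule.mem_iSup_iff_exists_finsupp _ _).1 hw
  exact ⟨c, hc, h⟩

/-- If `∑ wᵢ` with `wᵢ` of weight `i` is annihilated on the right by some `s ∈ A`, then so is every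
`wᵢ`: apply the coaction and compare coefficients. -/
theorem mul_incl_eq_zero {c : ℤ →₀ GWA k A σ a} (hc : ∀ i, c i ∈ weightSpace k A σ a i) {s : A}
    (h : (∑ i ∈ c.support, c i) * wIncl k A σ a s = 0) (i : ℤ) :
    c i * wIncl k A σ a s = 0 := by
  have h1 := congrArg (coaction k A σ a) h
  rw [Finset.sum_mul, map_sum, map_zero] at h1
  have h2 : ∀ j ∈ c.support, coaction k A σ a (c j * wIncl k A σ a s)
      = AddMonoidAlgebra.single j (c j * wIncl k A σ a s) := fun j _ => by
    rw [map_mul, (hc j).1, coaction_incl, AddMonoidAlgebra.single_mul_single, add_zero]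
  rw [Finset.sum_congr rfl h2] at h1
  have h3 := congrArg (fun f => f.coeff i) h1
  by_cases hi : c i = 0
  · rw [hi, zero_mul]
  · simp only [AddMonoidAlgebra.coeff_sum, AddMonoidAlgebra.coeff_single, AddMonoidAlgebra.coeff_zero,
      Finsupp.finsetSum_apply, Finsupp.single_apply, Finset.sum_ite_eq', Finsupp.mem_support_iff,
      ne_eq, hi, not_false_eq_true, if_true, Finsupp.zero_apply] at h3
    exact h3

/-! ### The Ore conditions -/

variable (S : Submonoid A)

/-- For `s ∈ S`, any finite set of translates `σ^i(s)` has a common multiple in `S`. -/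
theorem exists_common_multiple (hc : ∀ s ∈ S, s ∈ Set.center A)
    (hσ : ∀ (m : ℤ), ∀ s ∈ S, (σ ^ m) s ∈ S) (s : A) (hs : s ∈ S) (F : Finset ℤ) :
    ∃ t ∈ S, ∀ i ∈ F, ∃ q : A, t = q * (σ ^ i) s := by
  classical
  induction F using Finset.induction_on with
  | empty => exact ⟨1, S.one_mem, by simp⟩
  | insert i F _ ih =>
    obtain ⟨t, ht, h⟩ := ih
    refine ⟨t * (σ ^ i) s, S.mul_mem ht (hσ i s hs), fun j hj => ?_⟩
    rcases Finset.mem_insert.1 hj with rfl | hj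
    · exact ⟨t, rfl⟩
    · obtain ⟨q, rfl⟩ := h j hj
      refine ⟨q * (σ ^ i) s, ?_⟩
      rw [mul_assoc, mul_assoc, Semigroup.mem_center_iff.1 (hc _ (hσ i s hs))]

/-- The multiplicative set of the localization is just the image of `S`. -/
theorem mem_closure_incl {t : GWA k A σ a} :
    t ∈ Submonoid.closure (GWA.incl k A σ a '' (S : Set A)) ↔ ∃ s ∈ S, wIncl k A σ a s = t := by
  have h : GWA.incl k A σ a '' (S : Set A)
      = (S.map (wIncl k A σ a : A →* GWA k A σ a) : Set (GWA k A σ a)) := rfl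
  rw [h, Submonoid.closure_eq]
  rfl

/-- The image of `S` in `W_{a,σ}` is a left Ore set: its elements are not central, but they
commute with weight vectors up to powers of `σ`, and a finite sum of weight vectors is handled by a
common multiple of the finitely many translates that occur. -/
theorem nonempty_oreSet_gwa (hc : ∀ s ∈ S, s ∈ Set.center A)
    (hσ : ∀ (m : ℤ), ∀ s ∈ S, (σ ^ m) s ∈ S) :
    Nonempty (OreLocalization.OreSet (Submonoid.closure (GWA.incl k A σ a '' (S : Set A)))) := by
  -- for `w = ∑ cᵢ` and `t = qᵢ σ^i(s)` one has `t w = (∑ qᵢ cᵢ) s`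
  have key : ∀ s ∈ S, ∀ c : ℤ →₀ GWA k A σ a, (∀ i, c i ∈ weightSpace k A σ a i) →
      ∃ t ∈ S, ∃ q : ℤ → A, wIncl k A σ a t * ∑ i ∈ c.support, c i
        = ∑ i ∈ c.support, wIncl k A σ a (q i) * (c i * wIncl k A σ a s) := by
    intro s hs c hcw
    obtain ⟨t, ht, h⟩ := exists_common_multiple k A σ S hc hσ s hs c.support
    choose! q hq using h
    refine ⟨t, ht, q, ?_⟩
    rw [Finset.mul_sum]
    refine Finset.sum_congr rfl fun i hi => ?_
    rw [(hcw i).2 s (hc s hs), ← mul_assoc, ← map_mul, ← hq i hi]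
  rw [OreLocalization.nonempty_oreSet_iff]
  constructor
  · rintro r₁ r₂ ⟨t, ht⟩ h
    obtain ⟨s, hs, rfl⟩ := (mem_closure_incl k A σ a S).1 ht
    obtain ⟨c, hcw, hsum⟩ := exists_weight_decomposition k A σ a (r₁ - r₂)
    obtain ⟨t', ht', q, hq⟩ := key s hs c hcw
    have h0 : (∑ i ∈ c.support, c i) * wIncl k A σ a s = 0 := by
      rw [hsum, sub_mul]; exact sub_eq_zero.2 h
    refine ⟨⟨_, (mem_closure_incl k A σ a S).2 ⟨t', ht', rfl⟩⟩, ?_⟩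
    rw [← sub_eq_zero, ← mul_sub, ← hsum]
    refine hq.trans (Finset.sum_eq_zero fun i _ => ?_)
    rw [mul_incl_eq_zero k A σ a hcw h0, mul_zero]
  · rintro r ⟨t, ht⟩
    obtain ⟨s, hs, rfl⟩ := (mem_closure_incl k A σ a S).1 ht
    obtain ⟨c, hcw, rfl⟩ := exists_weight_decomposition k A σ a r
    obtain ⟨t', ht', q, hq⟩ := key s hs c hcw
    refine ⟨∑ i ∈ c.support, wIncl k A σ a (q i) * c i,
      ⟨_, (mem_closure_incl k A σ a S).2 ⟨t', ht', rfl⟩⟩, hq.trans ?_⟩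
    rw [Finset.sum_mul]
    exact Finset.sum_congr rfl fun i _ => (mul_assoc _ _ _).symm

theorem nonempty_oreSet_of_central (hc : ∀ s ∈ S, s ∈ Set.center A) :
    Nonempty (OreLocalization.OreSet S) := by
  rw [OreLocalization.nonempty_oreSet_iff]
  have hc' : ∀ (s : S) (r : A), r * s = s * r := fun s => Semigroup.mem_center_iff.1 (hc s s.2)
  exact ⟨fun r₁ r₂ s h => ⟨s, by rw [← hc', ← hc', h]⟩, fun r s => ⟨r, s, (hc' s r).symm⟩⟩

end GWA

/-! ### The isomorphism -/

section Main

variable (S : Submonoid A) [OreLocalization.OreSet S]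

/-- The localization map `A → A_S` as an algebra homomorphism. -/
def num : A →ₐ[k] OreLocalization S A :=
  { OreLocalization.numeratorRingHom with commutes' := fun _ => rfl }

theorem isUnit_num (s : A) (hs : s ∈ S) : IsUnit (num k A S s) :=
  isUnit_numerator S s hs

/-- `σ` extends to an automorphism of `A_S` because `S` is stable under `σ` and `σ⁻¹`. -/
theorem exists_tau (hσ : ∀ s ∈ S, σ s ∈ S) (hσ' : ∀ s ∈ S, σ.symm s ∈ S) :
    ∃ τ : OreLocalization S A ≃ₐ[k] OreLocalization S A,
      ∀ u : A, τ (num k A S u) = num k A S (σ u) := by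
  obtain ⟨f, hf⟩ := exists_ore_lift k S ((num k A S).comp (σ : A →ₐ[k] A))
    (fun s hs => isUnit_num k A S _ (hσ s hs))
  obtain ⟨g, hg⟩ := exists_ore_lift k S ((num k A S).comp (σ.symm : A →ₐ[k] A))
    (fun s hs => isUnit_num k A S _ (hσ' s hs))
  have hf' : ∀ u, f (num k A S u) = num k A S (σ u) := hf
  have hg' : ∀ u, g (num k A S u) = num k A S (σ.symm u) := hg
  refine ⟨AlgEquiv.ofAlgHom f g (ore_hom_ext fun r => ?_) (ore_hom_ext fun r => ?_), hf⟩
  · change f (g (num k A S r)) = num k A S r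
    rw [hg', hf', AlgEquiv.apply_symm_apply]
  · change g (f (num k A S r)) = num k A S r
    rw [hf', hg', AlgEquiv.symm_apply_apply]

/-- Both sides have the same universal property. The isomorphism sends `x ↦ x` and `y ↦ a x⁻¹`. -/
theorem nonempty_equiv (a : A) (ha : a ∈ Set.center A) (haS : a ∈ S) (hσaS : σ a ∈ S)
    (T : Submonoid (GWA k A σ a)) (hT : ∀ t, t ∈ T ↔ ∃ s ∈ S, wIncl k A σ a s = t)
    [OreLocalization.OreSet T] (τ : OreLocalization S A ≃ₐ[k] OreLocalization S A)
    (hτ : ∀ u : A, τ (num k A S u) = num k A S (σ u)) :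
    Nonempty (OreLocalization T (GWA k A σ a)
      ≃ₐ[k] SkewLaurent k (OreLocalization S A) τ) := by
  let L := SkewLaurent k (OreLocalization S A) τ
  let nW : GWA k A σ a →ₐ[k] OreLocalization T (GWA k A σ a) := num k (GWA k A σ a) T
  let X : L := SkewLaurent.X k (OreLocalization S A) τ
  let Xi : L := SkewLaurent.Xinv k (OreLocalization S A) τ
  let j : A →ₐ[k] L := (slIncl k (OreLocalization S A) τ).comp (num k A S)
  have hXXi : X * Xi = 1 := slX_mul_Xinv k _ τ
  have hXiX : Xi * X = 1 := slXinv_mul_X k _ τ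
  have hXj : ∀ u, X * j u = j (σ u) * X := fun u => by
    simpa [X, j, hτ] using slX_mul_incl k _ τ (num k A S u)
  have hXij : ∀ u, Xi * j (σ u) = j u * Xi := fun u => by
    simpa [Xi, j, hτ] using slXinv_mul_incl k _ τ (num k A S u)
  -- `W_{a,σ} → A_S[x,x⁻¹;τ]`, `y ↦ a x⁻¹`
  obtain ⟨φ₀, hφu, hφX, hφY⟩ := exists_w_lift k A σ a j X (j a * Xi)
    (by rw [mul_assoc, hXiX, mul_one])
    (by rw [← mul_assoc, hXj, mul_assoc, hXXi, mul_one])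
    hXj
    (fun u => by
      rw [mul_assoc, hXij, ← mul_assoc, ← mul_assoc, ← map_mul, ← map_mul,
        Semigroup.mem_center_iff.1 ha u])
  obtain ⟨φ, hφ⟩ := exists_ore_lift k T φ₀ (fun t ht => by
    obtain ⟨s, hs, rfl⟩ := (hT t).1 ht
    rw [hφu]
    exact (isUnit_num k A S s hs).map (slIncl k (OreLocalization S A) τ))
  have hφ' : ∀ w, φ (nW w) = φ₀ w := hφ
  -- `A_S → T⁻¹W`
  have hunit : ∀ s ∈ S, IsUnit (nW (wIncl k A σ a s)) := fun s hs =>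
    isUnit_num k _ T _ ((hT _).2 ⟨s, hs, rfl⟩)
  let nA : A →ₐ[k] OreLocalization T (GWA k A σ a) := nW.comp (wIncl k A σ a)
  obtain ⟨i, hi⟩ := exists_ore_lift (B := OreLocalization T (GWA k A σ a)) k S nA hunit
  have hi' : ∀ u, i (num k A S u) = nW (wIncl k A σ a u) := hi
  -- `x` is a unit in `T⁻¹W`, as both `y x = a` and `x y = σ(a)` are
  have hYX : nW (GWA.Y k A σ a) * nW (GWA.X k A σ a) = nW (wIncl k A σ a a) := by
    rw [← map_mul, wY_mul_X]
  have hXu : IsUnit (nW (GWA.X k A σ a)) := by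
    rw [isUnit_iff_exists_and_exists]
    obtain ⟨u, hu⟩ := hunit a haS
    obtain ⟨v, hv⟩ := hunit (σ a) hσaS
    refine ⟨⟨nW (GWA.Y k A σ a) * ↑v⁻¹, ?_⟩, ⟨↑u⁻¹ * nW (GWA.Y k A σ a), ?_⟩⟩
    · rw [← mul_assoc, ← map_mul, wX_mul_Y, ← hv, Units.mul_inv]
    · rw [mul_assoc, hYX, ← hu, Units.inv_mul]
  obtain ⟨x, hx⟩ := hXu
  -- `i ∘ τ` and conjugation of `i` by `x` agree on `A`, hence on `A_S`
  have hconj : ∀ v, (x : OreLocalization T (GWA k A σ a)) * i v * ↑x⁻¹ = i (τ v) := by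
    let conj : OreLocalization S A →ₐ[k] OreLocalization T (GWA k A σ a) :=
      { toFun := fun v => (x : OreLocalization T (GWA k A σ a)) * i v * ↑x⁻¹
        map_one' := by simp
        map_mul' := fun v w => by simp [mul_assoc]
        map_zero' := by simp
        map_add' := fun v w => by simp [mul_add, add_mul]
        commutes' := fun r => by
          rw [AlgHom.commutes, ← Algebra.commutes, mul_assoc, Units.mul_inv, mul_one] }
    have h : conj = i.comp (τ : OreLocalization S A →ₐ[k] OreLocalization S A) := by
      refine ore_hom_ext (B := OreLocalization T (GWA k A σ a)) fun r => ?_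
      change (x : OreLocalization T (GWA k A σ a)) * i (num k A S r) * ↑x⁻¹
        = i (τ (num k A S r))
      rw [hτ, hi', hi', hx, ← map_mul, wX_mul_incl, map_mul, ← hx, mul_assoc, Units.mul_inv,
        mul_one]
    exact fun v => DFunLike.congr_fun h v
  obtain ⟨ψ, hψu, hψX, hψXi⟩ := exists_sl_lift (B := OreLocalization T (GWA k A σ a)) k
    (OreLocalization S A) τ i x ↑x⁻¹
    x.mul_inv x.inv_mul (fun v => by rw [← hconj, mul_assoc, Units.inv_mul, mul_one])
  refine ⟨AlgEquiv.ofAlgHom φ ψ ?_ ?_⟩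
  · refine sl_hom_ext (fun v => ?_) ?_
    · have h : (φ.comp i) = slIncl k (OreLocalization S A) τ := by
        refine ore_hom_ext fun r => ?_
        change φ (i (num k A S r)) = slIncl k (OreLocalization S A) τ (num k A S r)
        rw [hi', hφ', hφu]
        rfl
      change φ (ψ _) = slIncl k (OreLocalization S A) τ v
      rw [hψu]
      exact DFunLike.congr_fun h v
    · change φ (ψ _) = X
      rw [hψX, hx, hφ', hφX]
  · refine ore_hom_ext (R := GWA k A σ a) (B := OreLocalization T (GWA k A σ a)) fun w => ?_
    have h : ψ.comp φ₀ = nW := by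
      refine w_hom_ext (B := OreLocalization T (GWA k A σ a)) (fun u => ?_) ?_ ?_
      · change ψ (φ₀ _) = _
        rw [hφu]
        exact (hψu _).trans (hi' u)
      · change ψ (φ₀ _) = _
        rw [hφX]
        exact hψX.trans hx
      · change ψ (φ₀ _) = _
        have hja : ψ (j a) = nW (wIncl k A σ a a) := (hψu _).trans (hi' a)
        rw [hφY, map_mul, hja, show ψ Xi = _ from hψXi, ← hYX, ← hx, mul_assoc, Units.mul_inv,
          mul_one]
    change ψ (φ (nW w)) = nW w
    rw [hφ']
    exact DFunLike.congr_fun h w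

end Main

end GWALocalization

/-- Localizing the generalized Weyl algebra `W_{a,σ}` at the multiplicative
set generated by the `σ^m(a)` (`m ∈ ℤ`) yields the skew Laurent ring over `A_S`: the
birational equivalence `W_{a,σ} ⊆ A[x,x⁻¹;σ]` becomes an isomorphism after localization. -/
theorem gwa_localization_equiv_skewLaurent (a : A) (ha : a ∈ Set.center A)
    (S : Submonoid A) (hS : S = Submonoid.closure {u : A | ∃ m : ℤ, u = (σ ^ m) a}) :
    ∃ _hS : OreLocalization.OreSet S,
    ∃ _hT : OreLocalization.OreSet
        (Submonoid.closure (GWA.incl k A σ a '' (S : Set A))),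
    ∃ τ : OreLocalization S A ≃ₐ[k] OreLocalization S A,
      (∀ u : A, τ (OreLocalization.numeratorRingHom u)
          = OreLocalization.numeratorRingHom (σ u)) ∧
      Nonempty
        (OreLocalization (Submonoid.closure (GWA.incl k A σ a '' (S : Set A)))
            (GWA k A σ a)
          ≃ₐ[k] SkewLaurent k (OreLocalization S A) τ) := by
  have hgen : ∀ m : ℤ, (σ ^ m) a ∈ S := fun m =>
    hS ▸ Submonoid.subset_closure ⟨m, rfl⟩
  have hc : ∀ s ∈ S, s ∈ Set.center A := by
    have h : S ≤ Submonoid.center A := by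
      rw [hS, Submonoid.closure_le]
      rintro _ ⟨m, rfl⟩
      exact GWALocalization.center_map k A _ ha
    exact fun s hs => h hs
  have hσ : ∀ (m : ℤ), ∀ s ∈ S, (σ ^ m) s ∈ S := by
    intro m
    have h : S ≤ S.comap ((σ ^ m : A ≃ₐ[k] A) : A →* A) := by
      conv_lhs => rw [hS]
      rw [Submonoid.closure_le]
      rintro _ ⟨n, rfl⟩
      have := hgen (m + n)
      rw [zpow_add] at this
      exact this
    exact fun s hs => h hs
  obtain ⟨i₁⟩ := GWALocalization.nonempty_oreSet_of_central A S hc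
  obtain ⟨i₂⟩ := GWALocalization.nonempty_oreSet_gwa k A σ a S hc hσ
  obtain ⟨τ, hτ⟩ := GWALocalization.exists_tau k A σ S
    (fun s hs => by simpa using hσ 1 s hs)
    (fun s hs => by simpa [zpow_neg_one] using hσ (-1) s hs)
  exact ⟨i₁, i₂, τ, hτ, GWALocalization.nonempty_equiv k A σ S a ha
    (by simpa using hgen 0) (by simpa using hgen 1) _
    (fun _ => GWALocalization.mem_closure_incl k A σ a S) τ hτ⟩

end
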